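/- Let G = ℤ/4 act on L = ℤ^4 by the matrix M = [[0,1,0,0],[-1,0,0,1],[0,0,-1,1],[0,0,0,1]]. Then for the induced action of G on H^j(L,ℤ): H^0(G, H^j(L,ℤ)) ≅ ℤ for 0 ≤ j ≤ 3; H^i(G, H^j(L,ℤ)) ≅ ℤ/2 for j = 1,3 and all i ≥ 1; H^i(G, H^2(L,ℤ)) ≅ ℤ/2 for even i ≥ 2; H^i(G, H^4(L,ℤ)) ≅ ℤ/2 for odd i; H^i(G, H^0(L,ℤ)) ≅ ℤ/4 for even i ≥ 2; H^i(G, H^2(L,ℤ)) ≅ ℤ/4 for odd i; and H^i(G, H^j(L,ℤ)) = 0 in all remaining cases. -/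

import Mathlib

open Matrix

namespace Crystal

/-- The lattice `ℤ^n`, written multiplicatively so that it can be a factor of a semidirect
product of groups. -/
abbrev Lat (n : ℕ) : Type := Multiplicative (Fin n → ℤ)

/-- The invertible integer matrix determined by `M` with `M ^ (m + 1) = 1`. -/
def matUnit {n : ℕ} (M : Matrix (Fin n) (Fin n) ℤ) (m : ℕ) (hm : M ^ (m + 1) = 1) :
    (Matrix (Fin n) (Fin n) ℤ)ˣ :=
  ⟨M, M ^ m, by rw [← pow_succ']; exact hm, by rw [← pow_succ]; exact hm⟩

/-- Linear automorphisms of `ℤ^n` as multiplicative automorphisms of the multiplicative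
version of `ℤ^n`. -/
def linToAut (n : ℕ) : ((Fin n → ℤ) ≃ₗ[ℤ] (Fin n → ℤ)) →* MulAut (Lat n) :=
  MonoidHom.mk' (fun e => AddEquiv.toMultiplicative e.toAddEquiv) (fun _ _ => rfl)

/-- An invertible integer matrix acts on the (multiplicative) lattice `ℤ^n` by (left)
matrix-vector multiplication. -/
def glToAut (n : ℕ) : (Matrix (Fin n) (Fin n) ℤ)ˣ →* MulAut (Lat n) :=
  (linToAut n).comp
    ((LinearMap.GeneralLinearGroup.generalLinearEquiv ℤ (Fin n → ℤ)).toMonoidHom.comp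
      (Matrix.GeneralLinearGroup.toLin).toMonoidHom)

/-- The homomorphism from `ℤ/m` (written multiplicatively) to a group `G` sending the
generator `1` to a chosen element `α` satisfying `α ^ m = 1`. -/
def zmodHom {G : Type*} [Group G] (m : ℕ) [NeZero m] (α : G) (hα : α ^ m = 1) :
    Multiplicative (ZMod m) →* G :=
  MonoidHom.mk' (fun g => α ^ (g.toAdd.val)) (by
    intro a b
    show α ^ (ZMod.val (a.toAdd + b.toAdd)) = α ^ (ZMod.val a.toAdd) * α ^ (ZMod.val b.toAdd)
    rw [ZMod.val_add, ← pow_eq_pow_mod _ hα, pow_add])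

/-- The action of `ℤ/q` on the lattice `ℤ^n` in which the generator `1` of `ℤ/q` acts by left
multiplication by the integer matrix `M`; `M` is required to satisfy `M ^ q = 1`. -/
def matAction {n : ℕ} (q : ℕ) [NeZero q] (M : Matrix (Fin n) (Fin n) ℤ)
    (hq : M ^ q = 1) : Multiplicative (ZMod q) →* MulAut (Lat n) :=
  zmodHom q (glToAut n (matUnit M (q - 1) (by
      rwa [Nat.sub_add_cancel (Nat.one_le_iff_ne_zero.2 (NeZero.ne q))])))
    (by
      rw [← map_pow]
      convert map_one (glToAut n)
      ext i j
      rw [Units.val_pow_eq_pow_val]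
      simp [matUnit, hq])

/-- The crystallographic group `ℤ^n ⋊ ℤ/q` in which the generator `1` of `ℤ/q` acts on the
lattice `ℤ^n` by left multiplication by the integer matrix `M` (with `M ^ q = 1`). -/
abbrev Crys {n : ℕ} (q : ℕ) [NeZero q] (M : Matrix (Fin n) (Fin n) ℤ) (hq : M ^ q = 1) : Type :=
  SemidirectProduct (Lat n) (Multiplicative (ZMod q)) (matAction q M hq)


open CategoryTheory groupCohomology

variable {k : Type} [CommRing k]

lemma comp_contractNth {G H : Type*} [Monoid G] [Monoid H] (f : G →* H) {n : ℕ}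
    (j : Fin (n + 1)) (g : Fin (n + 1) → G) (i : Fin n) :
    f (Fin.contractNth j (· * ·) g i) = Fin.contractNth j (· * ·) (fun l => f (g l)) i := by
  rcases lt_trichotomy (i : ℕ) j with h | h | h
  · rw [Fin.contractNth_apply_of_lt _ _ _ _ h, Fin.contractNth_apply_of_lt _ _ _ _ h]
  · rw [Fin.contractNth_apply_of_eq _ _ _ _ h, Fin.contractNth_apply_of_eq _ _ _ _ h,
      _root_.map_mul]
  · rw [Fin.contractNth_apply_of_gt _ _ _ _ h, Fin.contractNth_apply_of_gt _ _ _ _ h]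

/-- The map of inhomogeneous cochain complexes induced (contravariantly in the group,
covariantly in the coefficients) by a group homomorphism `f : H →* G` together with a
compatible linear map `τ : A → B` of coefficients. -/
def cochainsMap {G H : Type} [Group G] [Group H] (A : Rep k G) (B : Rep k H)
    (f : H →* G) (τ : A →ₗ[k] B)
    (hcomp : ∀ (h : H) (a : A), τ (A.ρ (f h) a) = B.ρ h (τ a)) :
    inhomogeneousCochains A ⟶ inhomogeneousCochains B where
  f n := ModuleCat.ofHom
    { toFun := fun F v => τ (F (fun i => f (v i)))
      map_add' := fun x y => by funext v; simp
      map_smul' := fun r x => by funext v; simp }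
  comm' i j hij := by
    have hij' : i + 1 = j := hij
    subst hij'
    rw [inhomogeneousCochains.d_def, inhomogeneousCochains.d_def]
    ext F v
    show (inhomogeneousCochains.d B i).hom (fun w => τ (F (fun l => f (w l)))) v
      = τ ((inhomogeneousCochains.d A i).hom F (fun l => f (v l)))
    simp only [inhomogeneousCochains.d_hom_apply, map_add, map_sum, _root_.map_smul]
    congr 1
    · exact (hcomp (v 0) _).symm
    · refine Finset.sum_congr rfl fun j' _ => ?_
      have hc : (fun l => f (j'.contractNth (· * ·) v l))
          = j'.contractNth (· * ·) (fun l => f (v l)) := by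
        funext l
        exact comp_contractNth f j' v l
      rw [hc]

lemma cochainsMap_eq_id {G : Type} [Group G] (A : Rep k G) (f : G →* G) (τ : A →ₗ[k] A)
    (hcomp : ∀ (h : G) (a : A), τ (A.ρ (f h) a) = A.ρ h (τ a))
    (hf : ∀ x, f x = x) (hτ : ∀ a, τ a = a) :
    cochainsMap A A f τ hcomp = 𝟙 _ := by
  apply HomologicalComplex.Hom.ext
  funext n
  ext F v
  show τ (F (fun i => f (v i))) = F v
  simp only [hf, hτ]

lemma cochainsMap_comp {G H K : Type} [Group G] [Group H] [Group K]
    (A : Rep k G) (B : Rep k H) (C : Rep k K)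
    (f₁ : H →* G) (τ₁ : A →ₗ[k] B) (h₁ : ∀ (h : H) (a : A), τ₁ (A.ρ (f₁ h) a) = B.ρ h (τ₁ a))
    (f₂ : K →* H) (τ₂ : B →ₗ[k] C) (h₂ : ∀ (h : K) (a : B), τ₂ (B.ρ (f₂ h) a) = C.ρ h (τ₂ a))
    (f₃ : K →* G) (τ₃ : A →ₗ[k] C) (h₃ : ∀ (h : K) (a : A), τ₃ (A.ρ (f₃ h) a) = C.ρ h (τ₃ a))
    (hf : ∀ x, f₁ (f₂ x) = f₃ x) (hτ : ∀ a, τ₂ (τ₁ a) = τ₃ a) :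
    cochainsMap A B f₁ τ₁ h₁ ≫ cochainsMap B C f₂ τ₂ h₂ = cochainsMap A C f₃ τ₃ h₃ := by
  apply HomologicalComplex.Hom.ext
  funext n
  ext F v
  show τ₂ (τ₁ (F (fun i => f₁ (f₂ (v i))))) = τ₃ (F (fun i => f₃ (v i)))
  simp only [hf]
  exact hτ _

/-- Given an action `φ` of a group `G` on a group `L` and a representation `ψ` of `G` on a
`k`-module `V`, this is `H^j(L, V)` (with `L` acting trivially on the coefficients `V`),
endowed with the `G`-action functorially induced by the action of `G` on `L` and on `V`:
`g` acts via the conjugation automorphism `φ g⁻¹` of `L` and via `ψ g` on `V`. -/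
noncomputable def cohRep {G L V : Type} [Group G] [Group L] [AddCommGroup V] [Module k V]
    (φ : G →* MulAut L) (ψ : Representation k G V) (j : ℕ) : Rep k G :=
  Rep.of (X := groupCohomology (Rep.trivial k L V) j)
    { toFun := fun g => (HomologicalComplex.homologyMap
        (cochainsMap (Rep.trivial k L V) (Rep.trivial k L V) (φ g⁻¹).toMonoidHom (ψ g)
          (fun _ _ => rfl)) j).hom
      map_one' := by
        have h := cochainsMap_eq_id (Rep.trivial k L V) (φ 1⁻¹).toMonoidHom (ψ 1)
          (fun _ _ => rfl) (fun x => by simp) (fun a => by simp)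
        rw [h, HomologicalComplex.homologyMap_id]
        rfl
      map_mul' := fun g₁ g₂ => by
        have h := cochainsMap_comp (Rep.trivial k L V) (Rep.trivial k L V) (Rep.trivial k L V)
          (φ g₂⁻¹).toMonoidHom (ψ g₂) (fun _ _ => rfl)
          (φ g₁⁻¹).toMonoidHom (ψ g₁) (fun _ _ => rfl)
          (φ (g₁ * g₂)⁻¹).toMonoidHom (ψ (g₁ * g₂)) (fun _ _ => rfl)
          (fun x => by simp [_root_.mul_inv_rev]) (fun a => by simp)
        rw [← h, HomologicalComplex.homologyMap_comp]
        rfl }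


/-- `H^i(G, H^j(L, ℤ))`: the `i`-th cohomology of the cyclic group `ℤ/q` with coefficients in
the `j`-th cohomology of the lattice `ℤ^n` (with trivial `ℤ` coefficients), where the
`ℤ/q`-action on `H^j(ℤ^n, ℤ)` is the one functorially induced by the matrix action on the
lattice. -/
noncomputable abbrev cohOfCoh {n : ℕ} (q : ℕ) [NeZero q] (M : Matrix (Fin n) (Fin n) ℤ)
    (hq : M ^ q = 1) (i j : ℕ) : ModuleCat ℤ :=
  groupCohomology
    (cohRep (matAction q M hq) (1 : Representation ℤ (Multiplicative (ZMod q)) ℤ) j) i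

/-- `H^k(Γ, ℤ)` for `Γ = ℤ^n ⋊ ℤ/q`, with trivial coefficients `ℤ`. -/
noncomputable abbrev cohCrys {n : ℕ} (q : ℕ) [NeZero q] (M : Matrix (Fin n) (Fin n) ℤ)
    (hq : M ^ q = 1) (k : ℕ) : ModuleCat ℤ :=
  groupCohomology (Rep.trivial ℤ (Crys q M hq) ℤ) k

end Crystal

/-- The holonomy matrix. -/
def holM : Matrix (Fin 4) (Fin 4) ℤ := !![0, 1, 0, 0; -1, 0, 0, 1; 0, 0, -1, 1; 0, 0, 0, 1]

lemma holM_pow : holM ^ 4 = 1 := by decide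

/-- `H^k(ℤ^4 ⋊ ℤ/4, ℤ)`, where the generator of `ℤ/4` acts on `ℤ^4` by left
multiplication by the matrix `holM`. -/
noncomputable abbrev H (k : ℕ) : ModuleCat ℤ := Crystal.cohCrys 4 holM holM_pow k

/-- `H^i(ℤ/4, H^j(ℤ^4, ℤ))`, with the functorially induced action on coefficients. -/
noncomputable abbrev Hc (i j : ℕ) : ModuleCat ℤ := Crystal.cohOfCoh 4 holM holM_pow i j

/-
A class in `H^j(ℤ^n, ℤ)` pairs with `e_{I 0} ∧ … ∧ e_{I (j-1)}` by evaluating a cocycle on the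
antisymmetrized chain. Multilinear forms are cocycles, and the products of coordinate functions
show that these pairings, for increasing `I`, map `H^j(ℤ^n, ℤ)` onto `ℤ^(n choose j)`. Peeling off
one factor `ℤ` at a time by the long exact sequence of `0 → k → coind k → coind k → 0` and Shapiro's
lemma, `H^j(ℤ^n, k)` needs at most `n choose j` generators, so the pairings are coordinates. In
them the generator of `ℤ/q` acts by the transposed compound matrix `B` of `M⁻¹ = M^(q-1)`.

The cohomology of a cyclic group is `ker (B - 1)` in degree zero and then alternates between
`ker N / im (B - 1)` and `ker (B - 1) / im N`, where `N = 1 + B + … + B^(q-1)`. For the given matrix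
these subquotients are identified by explicit integral certificates.
-/

section LatticeCoefficients

open CategoryTheory groupCohomology

universe u

section SpanRank

variable {R M N P : Type u} [CommRing R] [AddCommGroup M] [Module R M]
  [AddCommGroup N] [Module R N] [AddCommGroup P] [Module R P]

lemma spanRank_le_spanRank_top [IsDomain R] [IsPrincipalIdealRing R] [Module.Finite R M]
    (p : Submodule R M) :
    p.spanRank ≤ (⊤ : Submodule R M).spanRank := by
  let S := (⊤ : Submodule R M).generators
  have : Finite S := Module.Finite.fg_top.finite_generators
  let f : (S →₀ R) →ₗ[R] M := Finsupp.linearCombination R Subtype.val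
  have hf : Function.Surjective f := by
    rw [← LinearMap.range_eq_top, Finsupp.range_linearCombination, Subtype.range_coe,
      Submodule.span_generators]
  obtain ⟨_, ⟨b⟩⟩ := Submodule.nonempty_basis_of_pid (Finsupp.basisSingleOne (R := R) (ι := S))
    (p.comap f)
  have := Module.Free.of_basis b
  calc p.spanRank = ((p.comap f).map f).spanRank := by
        rw [Submodule.map_comap_eq_of_surjective hf]
    _ ≤ (p.comap f).spanRank := Submodule.spanRank_map_le f _
    _ = Module.rank R (p.comap f) := by
        rw [Submodule.rank_eq_spanRank_of_free, Submodule.spanRank_top]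
    _ ≤ Module.rank R (S →₀ R) := Submodule.rank_le _
    _ = (⊤ : Submodule R M).spanRank := by
        rw [rank_finsupp_self', Submodule.generators_card]

lemma spanRank_top_le_ker_add_range (g : M →ₗ[R] N) :
    (⊤ : Submodule R M).spanRank ≤
      (LinearMap.ker g).spanRank + (LinearMap.range g).spanRank := by
  let S := (LinearMap.range g).generators
  have hS : ∀ y : S, ∃ x, g x = y := fun y =>
    LinearMap.mem_range.1 (Submodule.FG.generators_mem _ y.2)
  choose s hs using hS
  have hmap : (Submodule.span R (Set.range s)).map g = LinearMap.range g := by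
    rw [Submodule.map_span, ← Set.range_comp, show g ∘ s = Subtype.val from funext hs,
      Subtype.range_coe, Submodule.span_generators]
  have hsup : LinearMap.ker g ⊔ Submodule.span R (Set.range s) = ⊤ := by
    rw [sup_comm, ← Submodule.comap_map_eq, hmap, LinearMap.range_eq_map,
      Submodule.comap_map_eq, top_sup_eq]
  calc (⊤ : Submodule R M).spanRank
      ≤ (LinearMap.ker g).spanRank + (Submodule.span R (Set.range s)).spanRank :=
        hsup ▸ Submodule.spanRank_sup_le_sum_spanRank
    _ ≤ (LinearMap.ker g).spanRank + (LinearMap.range g).spanRank := by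
        gcongr
        rw [← Submodule.generators_card (LinearMap.range g)]
        exact (Submodule.spanRank_span_le_card _).trans Cardinal.mk_range_le

lemma spanRank_top_le_add_of_exact [IsDomain R] [IsPrincipalIdealRing R] [Module.Finite R P]
    {f : M →ₗ[R] N} {g : N →ₗ[R] P} (hfg : Function.Exact f g) :
    (⊤ : Submodule R N).spanRank ≤
      (⊤ : Submodule R M).spanRank + (⊤ : Submodule R P).spanRank := by
  refine (spanRank_top_le_ker_add_range g).trans (add_le_add ?_ (spanRank_le_spanRank_top _))
  rw [hfg.linearMap_ker_eq]
  exact Submodule.spanRank_range_le f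

lemma injective_of_surjective_of_spanRank_le {ι : Type u} [Finite ι] (f : M →ₗ[R] ι → R)
    (hf : Function.Surjective f) (h : (⊤ : Submodule R M).spanRank ≤ Cardinal.mk ι) :
    Function.Injective f := by
  obtain ⟨S, hcard, hspan⟩ := (Submodule.FG.spanRank_le_iff_exists_span_set_card_le _).1 h
  have : Finite S :=
    Cardinal.lt_aleph0_iff_finite.1 (hcard.trans_lt (Cardinal.lt_aleph0_of_finite ι))
  obtain ⟨e⟩ : Nonempty (S ↪ ι) := Cardinal.le_def _ _ |>.1 hcard
  let b : (S →₀ R) →ₗ[R] M := Finsupp.linearCombination R Subtype.val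
  have hb : Function.Surjective b := by
    rw [← LinearMap.range_eq_top, Finsupp.range_linearCombination, Subtype.range_coe, hspan]
  have hinj : Function.Injective (f ∘ₗ b) := by
    let extend : (S →₀ R) →ₗ[R] ι → R :=
      (Finsupp.linearEquivFunOnFinite R R ι).toLinearMap ∘ₗ Finsupp.lmapDomain R R e
    have hextend : Function.Injective extend :=
      (Finsupp.linearEquivFunOnFinite R R ι).injective.comp
        (Finsupp.mapDomain_injective e.injective)
    exact OrzechProperty.injective_of_surjective_of_injective extend (f ∘ₗ b) hextend
      (hf.comp hb)
  exact Function.Injective.of_comp_right hinj hb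

end SpanRank

section CoinducedSequence

lemma exists_forall_add_one_sub_eq {A : Type*} [AddCommGroup A] (F : ℤ → A) :
    ∃ u : ℤ → A, ∀ n, u (n + 1) - u n = F n := by
  refine ⟨fun n => ∑ i ∈ Finset.range n.toNat, F i -
    ∑ i ∈ Finset.range (-n).toNat, F (-((i : ℤ) + 1)), fun n => ?_⟩
  obtain ⟨m, rfl | rfl⟩ : ∃ m : ℕ, n = m ∨ n = -(m + 1) := by
    rcases n with m | m
    · exact ⟨m, .inl rfl⟩
    · exact ⟨m, .inr (Int.negSucc_eq m)⟩
  · have hpos : ((m : ℤ) + 1).toNat = m + 1 := by omega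
    have hneg : (-((m : ℤ) + 1)).toNat = 0 := by omega
    have hneg' : (-(m : ℤ)).toNat = 0 := by omega
    simp only [hpos, hneg, hneg', Int.toNat_natCast, Finset.sum_range_succ]
    abel
  · have hpos : (-((m : ℤ) + 1) + 1).toNat = 0 := by omega
    have hneg : (-(-((m : ℤ) + 1) + 1)).toNat = m := by omega
    have hneg' : (-(-((m : ℤ) + 1))).toNat = m + 1 := by omega
    have hpos' : (-((m : ℤ) + 1)).toNat = 0 := by omega
    simp only [hpos, hneg, hneg', hpos', Finset.sum_range_succ]
    abel

variable {k Γ : Type u} [CommRing k] [CommGroup Γ] (p : Γ →* Multiplicative ℤ) (t : Γ)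

/-- The coinduction to `Γ` of the trivial representation `k` of `ker p`, i.e. the functions
`Γ → k` invariant under `ker p`. -/
noncomputable abbrev coindKer (k : Type u) [CommRing k] : Rep k Γ :=
  Rep.coind p.ker.subtype (Rep.trivial k p.ker k)

/-- The inclusion of the constant functions `k` into the `ker p`-invariant functions on `Γ`. -/
noncomputable def constToCoindKer : Rep.trivial k Γ k ⟶ coindKer p k :=
  Rep.ofHom
    { toFun := fun a => ⟨fun _ => a, fun _ _ => rfl⟩
      map_add' := fun _ _ => rfl
      map_smul' := fun _ _ => rfl
      isIntertwining' := fun _ => rfl }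

/-- The sequence `k → coind k → coind k`, whose second map is the difference operator `t - 1`.
It is short exact when `p t` generates `ℤ`. -/
noncomputable def coindKerShortComplex (k : Type u) [CommRing k] : ShortComplex (Rep k Γ) :=
  ShortComplex.mk (constToCoindKer p) (Rep.applyAsHom (coindKer p k) t - 𝟙 _) (by
    apply Rep.hom_ext
    ext
    exact sub_self (1 : k))

variable {p t}

lemma coindKer_apply_eq_apply_zpow (ht : p t = Multiplicative.ofAdd 1) (f : coindKer p k) (h : Γ) :
    f.1 h = f.1 (t ^ (p h).toAdd) := by
  have hmem : h * (t ^ (p h).toAdd)⁻¹ ∈ p.ker := by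
    rw [MonoidHom.mem_ker, map_mul, map_inv, map_zpow, ht, ← ofAdd_zsmul]
    simp
  simpa using f.2 ⟨_, hmem⟩ (t ^ (p h).toAdd)

lemma exact_of_forall_exists {G : Type u} [Group G] (X : ShortComplex (Rep.{u} k G))
    (h : ∀ x : X.X₂, X.g.hom x = 0 → ∃ y : X.X₁, X.f.hom y = x) : X.Exact := by
  rw [← ShortComplex.exact_map_iff_of_faithful _ (forget₂ (Rep.{u} k G) (ModuleCat.{u} k)),
    ShortComplex.moduleCat_exact_iff]
  exact h

lemma coindKerShortComplex_shortExact (ht : p t = Multiplicative.ofAdd 1) :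
    (coindKerShortComplex p t k).ShortExact where
  exact := by
    refine exact_of_forall_exists _ fun (f : coindKer p k) hf => ⟨f.1 1, ?_⟩
    have hstep (h : Γ) : f.1 (h * t) = f.1 h :=
      sub_eq_zero.1 (congrFun (congrArg Subtype.val hf) h)
    have hzpow (n : ℤ) : f.1 (t ^ n) = f.1 1 := by
      induction n using Int.induction_on with
      | zero => rw [zpow_zero]
      | succ n ih => rw [_root_.zpow_add_one, hstep, ih]
      | pred n ih => rw [← ih, ← hstep, ← _root_.zpow_add_one, sub_add_cancel]
    exact Subtype.ext (funext fun h => ((coindKer_apply_eq_apply_zpow ht f h).trans (hzpow _)).symm)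
  mono_f := by
    rw [Rep.mono_iff_injective]
    exact fun a b hab => congrFun (congrArg Subtype.val hab) 1
  epi_g := by
    rw [Rep.epi_iff_surjective]
    intro (f : coindKer p k)
    obtain ⟨u, hu⟩ := exists_forall_add_one_sub_eq fun n => f.1 (t ^ n)
    refine ⟨⟨fun h => u (p h).toAdd, ?_⟩, Subtype.ext (funext fun h => ?_)⟩
    · rintro ⟨s, hs⟩ h
      change u (p (s * h)).toAdd = u (p h).toAdd
      rw [map_mul, MonoidHom.mem_ker.1 hs, one_mul]
    · change u (p (h * t)).toAdd - u (p h).toAdd = f.1 h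
      rw [map_mul, ht, toAdd_mul, toAdd_ofAdd, hu, ← coindKer_apply_eq_apply_zpow ht]

end CoinducedSequence

section CohomologyOfLattices

variable (k : Type u) [CommRing k] [IsDomain k] [IsPrincipalIdealRing k]

lemma spanRank_groupCohomology_zero_le_one (G : Type u) [Group G] :
    (⊤ : Submodule k (groupCohomology (Rep.trivial k G k) 0)).spanRank ≤ 1 := by
  rw [Submodule.spanRank_eq_of_equiv (H0Iso (Rep.trivial k G k)).toLinearEquiv,
    Submodule.spanRank_top]
  refine (spanRank_le_spanRank_top (M := k) _).trans ?_
  rw [← Submodule.rank_eq_spanRank_of_free, CommSemiring.rank_self]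

variable {k} {Γ : Type u} [CommGroup Γ]

lemma spanRank_groupCohomology_succ_le {p : Γ →* Multiplicative ℤ} {t : Γ}
    (ht : p t = Multiplicative.ofAdd 1) (j : ℕ)
    [Module.Finite k (groupCohomology (Rep.trivial k p.ker k) (j + 1))] :
    (⊤ : Submodule k (groupCohomology (Rep.trivial k Γ k) (j + 1))).spanRank ≤
      (⊤ : Submodule k (groupCohomology (Rep.trivial k p.ker k) j)).spanRank +
      (⊤ : Submodule k (groupCohomology (Rep.trivial k p.ker k) (j + 1))).spanRank := by
  have hX := coindKerShortComplex_shortExact (k := k) ht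
  have hexact := (ShortComplex.ShortExact.moduleCat_exact_iff_function_exact _).1
    (mapShortComplex₁_exact hX (rfl : j + 1 = j + 1))
  have shapiro (i : ℕ) := (coindIso (Rep.trivial k p.ker k) i).toLinearEquiv
  have := Module.Finite.equiv (shapiro (j + 1)).symm
  rw [← Submodule.spanRank_eq_of_equiv (shapiro j),
    ← Submodule.spanRank_eq_of_equiv (shapiro (j + 1))]
  exact spanRank_top_le_add_of_exact hexact

lemma exists_hom_int_ker_mulEquiv {n : ℕ} (e : Γ ≃* Multiplicative (Fin (n + 1) → ℤ)) :
    ∃ (p : Γ →* Multiplicative ℤ) (t : Γ), p t = Multiplicative.ofAdd 1 ∧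
      Nonempty (p.ker ≃* Multiplicative (Fin n → ℤ)) := by
  let head := (Pi.evalAddMonoidHom (fun _ : Fin (n + 1) => ℤ) 0).toMultiplicative
  let tail := (LinearMap.funLeft ℤ ℤ (Fin.succ (n := n))).toAddMonoidHom.toMultiplicative
  let p : Γ →* Multiplicative ℤ := head.comp e.toMonoidHom
  refine ⟨p, e.symm (Multiplicative.ofAdd (Pi.single 0 1)), by simp [p, head],
    ⟨MulEquiv.ofBijective ((tail.comp e.toMonoidHom).comp p.ker.subtype) ⟨?_, fun y => ?_⟩⟩⟩
  · rw [injective_iff_map_eq_one]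
    intro x hx
    refine Subtype.ext ((map_eq_one_iff e e.injective).1 (Multiplicative.toAdd.injective ?_))
    exact funext (Fin.cases x.2 (congrFun hx))
  · refine ⟨⟨e.symm (Multiplicative.ofAdd (Fin.cons 0 y.toAdd)), ?_⟩, ?_⟩
    · simp [p, head]
    · simp [tail, LinearMap.funLeft]

lemma spanRank_groupCohomology_le_choose {n : ℕ} (e : Γ ≃* Multiplicative (Fin n → ℤ)) (j : ℕ) :
    (⊤ : Submodule k (groupCohomology (Rep.trivial k Γ k) j)).spanRank ≤ n.choose j := by
  induction n generalizing Γ j with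
  | zero =>
    cases j with
    | zero => simpa using spanRank_groupCohomology_zero_le_one k Γ
    | succ j =>
      have : Subsingleton Γ := e.toEquiv.subsingleton
      have := ModuleCat.subsingleton_of_isZero
        (isZero_groupCohomology_succ_of_subsingleton (Rep.trivial k Γ k) j)
      simp [Submodule.eq_bot_of_subsingleton]
  | succ n ih =>
    cases j with
    | zero => simpa using spanRank_groupCohomology_zero_le_one k Γ
    | succ j =>
      obtain ⟨p, t, ht, ⟨e'⟩⟩ := exists_hom_int_ker_mulEquiv e
      have : Module.Finite k (groupCohomology (Rep.trivial k p.ker k) (j + 1)) := by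
        rw [Module.finite_def, ← Submodule.spanRank_finite_iff_fg]
        exact (ih e' (j + 1)).trans_lt Cardinal.natCast_lt_aleph0
      rw [Nat.choose_succ_succ, Nat.cast_add]
      exact (spanRank_groupCohomology_succ_le ht j).trans (add_le_add (ih e' j) (ih e' (j + 1)))

end CohomologyOfLattices

section Contraction

variable {n : ℕ} {α : Type*}

lemma swap_castSucc_succ_comp_succAbove (i : Fin n) :
    Equiv.swap i.castSucc i.succ ∘ i.castSucc.succAbove = i.succ.succAbove := by
  ext l
  simp only [Function.comp_apply, Equiv.swap_apply_def, Fin.succAbove, Fin.ext_iff, Fin.lt_def]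
  grind

lemma comp_succAbove_succ_eq_update (i : Fin n) (g : Fin (n + 1) → α) :
    g ∘ i.succ.succAbove = Function.update (g ∘ i.castSucc.succAbove) i (g i.castSucc) := by
  ext l
  rcases eq_or_ne l i with rfl | hl
  · simp
  · rw [Function.update_of_ne hl, ← swap_castSucc_succ_comp_succAbove]
    refine congrArg g (Equiv.swap_apply_of_ne_of_ne (Fin.succAbove_ne _ _) fun h => hl ?_)
    rwa [← Fin.succAbove_castSucc_self, Fin.succAbove_right_inj] at h

lemma contractNth_castSucc_eq_update (op : α → α → α) (i : Fin n) (g : Fin (n + 1) → α) :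
    Fin.contractNth i.castSucc op g =
      Function.update (g ∘ i.castSucc.succAbove) i (op (g i.castSucc) (g i.succ)) := by
  ext l
  rcases eq_or_ne l i with rfl | hl
  · rw [Function.update_self, Fin.contractNth_apply_of_eq _ _ _ _ rfl]
  · rw [Function.update_of_ne hl, Fin.contractNth_apply_of_ne _ _ _ _ (Fin.val_ne_of_ne hl.symm)]
    rfl

lemma contractNth_last (op : α → α → α) (g : Fin (n + 1) → α) :
    Fin.contractNth (Fin.last n) op g = g ∘ Fin.castSucc :=
  funext fun l => Fin.contractNth_apply_of_lt _ _ _ _ l.is_lt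

lemma contractNth_castSucc_comp_swap (op : α → α → α) [Std.Commutative op] (i : Fin n)
    (g : Fin (n + 1) → α) :
    Fin.contractNth i.castSucc op (g ∘ Equiv.swap i.castSucc i.succ) =
      Fin.contractNth i.castSucc op g := by
  rw [contractNth_castSucc_eq_update, contractNth_castSucc_eq_update, Function.comp_assoc,
    swap_castSucc_succ_comp_succAbove, comp_succAbove_succ_eq_update, Function.update_idem,
    Function.comp_apply, Function.comp_apply, Equiv.swap_apply_left, Equiv.swap_apply_right,
    Std.Commutative.comm (op := op)]

end Contraction

section AlternatingEval

variable {k L V : Type u} [CommRing k] [AddCommGroup V] [Module k V]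

variable (k) in
/-- Evaluation of a cochain on the antisymmetrization `∑ σ, sign σ • [v (σ 0) | v (σ 1) | …]` of
the chain `v`. For a free abelian group these chains represent the homology classes
`v 0 ∧ v 1 ∧ …`. -/
def alternatingEval {j : ℕ} (v : Fin j → L) : ((Fin j → L) → V) →ₗ[k] V :=
  ∑ σ : Equiv.Perm (Fin j), Equiv.Perm.sign σ • LinearMap.proj (v ∘ σ)

lemma alternatingEval_apply {j : ℕ} (v : Fin j → L) (F : (Fin j → L) → V) :
    alternatingEval k v F = ∑ σ : Equiv.Perm (Fin j), Equiv.Perm.sign σ • F (v ∘ σ) := by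
  simp [alternatingEval]

lemma sum_sign_smul_comp_succ {n : ℕ} (v : Fin (n + 1) → L) (F : (Fin n → L) → V) :
    ∑ σ : Equiv.Perm (Fin (n + 1)), Equiv.Perm.sign σ • F (v ∘ σ ∘ Fin.succ) =
      (-1 : k) ^ n • ∑ σ : Equiv.Perm (Fin (n + 1)),
        Equiv.Perm.sign σ • F (v ∘ σ ∘ Fin.castSucc) := by
  rw [Finset.smul_sum]
  refine Fintype.sum_equiv (Equiv.mulRight (finRotate (n + 1))) _ _ fun σ => ?_
  have hrotate : finRotate (n + 1) ∘ Fin.castSucc = Fin.succ := by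
    ext l
    simp [Fin.coeSucc_eq_succ]
  rw [Equiv.coe_mulRight, Equiv.Perm.coe_mul, Function.comp_assoc, hrotate, Equiv.Perm.sign_mul,
    sign_finRotate]
  rcases Nat.even_or_odd n with h | h <;> simp [h.neg_one_pow]

variable [CommGroup L]

lemma trivial_d_apply (n : ℕ) (F : (Fin n → L) → V) (g : Fin (n + 1) → L) :
    (inhomogeneousCochains.d (Rep.trivial k L V) n).hom F g =
      F (g ∘ Fin.succ) + ∑ i : Fin (n + 1),
        (-1 : k) ^ ((i : ℕ) + 1) • F (Fin.contractNth i (· * ·) g) :=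
  rfl

lemma sum_sign_smul_contractNth_castSucc {n : ℕ} (v : Fin (n + 1) → L) (F : (Fin n → L) → V)
    (i : Fin n) :
    ∑ σ : Equiv.Perm (Fin (n + 1)),
      Equiv.Perm.sign σ • F (Fin.contractNth i.castSucc (· * ·) (v ∘ σ)) = 0 := by
  have hne : i.castSucc ≠ i.succ := Fin.castSucc_lt_succ.ne
  refine Finset.sum_involution (fun σ _ => σ * Equiv.swap i.castSucc i.succ) (fun σ _ => ?_)
    (fun σ _ _ h => hne ?_) (fun σ _ => Finset.mem_univ _) (fun σ _ => ?_)
  · rw [Equiv.Perm.coe_mul, ← Function.comp_assoc, contractNth_castSucc_comp_swap,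
      Equiv.Perm.sign_mul, Equiv.Perm.sign_swap hne, mul_neg_one, Units.neg_smul, add_neg_cancel]
  · exact Equiv.swap_eq_one_iff.1 (mul_eq_left.1 h)
  · rw [mul_assoc, Equiv.swap_mul_self, mul_one]

lemma alternatingEval_d {n : ℕ} (v : Fin (n + 1) → L) (F : (Fin n → L) → V) :
    alternatingEval k v ((inhomogeneousCochains.d (Rep.trivial k L V) n).hom F) = 0 := by
  have hinner (i : Fin n) : ∑ σ : Equiv.Perm (Fin (n + 1)), Equiv.Perm.sign σ •
      (-1 : k) ^ ((i.castSucc : ℕ) + 1) • F (Fin.contractNth i.castSucc (· * ·) (v ∘ σ)) = 0 := by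
    simp_rw [smul_comm (Equiv.Perm.sign _)]
    rw [← Finset.smul_sum, sum_sign_smul_contractNth_castSucc, smul_zero]
  rw [alternatingEval_apply]
  change ∑ σ : Equiv.Perm (Fin (n + 1)), Equiv.Perm.sign σ • (F ((v ∘ σ) ∘ Fin.succ) +
    ∑ i : Fin (n + 1), (-1 : k) ^ ((i : ℕ) + 1) • F (Fin.contractNth i (· * ·) (v ∘ σ))) = 0
  simp_rw [smul_add, Finset.sum_add_distrib, Finset.smul_sum]
  rw [Finset.sum_comm, Fin.sum_univ_castSucc, Finset.sum_eq_zero fun i _ => hinner i, zero_add]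
  simp_rw [contractNth_last, smul_comm (Equiv.Perm.sign _), Function.comp_assoc]
  rw [sum_sign_smul_comp_succ (k := k), ← Finset.smul_sum, Fin.val_last, pow_succ, mul_neg_one,
    neg_smul, add_neg_cancel]

end AlternatingEval

section MultilinearCochain

variable {k L V : Type u} [CommRing k] [CommGroup L] [AddCommGroup V] [Module k V] {n : ℕ}

lemma add_sum_alternating_add_last (T : Fin (n + 1) → V) :
    T 0 + (∑ i : Fin n, (-1 : k) ^ ((i : ℕ) + 1) • (T i.succ + T i.castSucc)) +
      (-1 : k) ^ (n + 1) • T (Fin.last n) = 0 := by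
  induction n with
  | zero => simp
  | succ n ih =>
    rw [Fin.sum_univ_castSucc, ← ih (T ∘ Fin.castSucc)]
    simp only [Function.comp_apply, Fin.castSucc_zero, Fin.castSucc_succ, Fin.val_castSucc,
      Fin.val_last, Fin.succ_last, pow_succ _ (n + 1)]
    module

/-- A multilinear map on the abelian group `L`, viewed as an inhomogeneous cochain. -/
def multilinearCochain (f : MultilinearMap ℤ (fun _ : Fin n => Additive L) V) :
    (Fin n → L) → V :=
  fun v => f (Additive.ofMul ∘ v)

variable (f : MultilinearMap ℤ (fun _ : Fin n => Additive L) V)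

lemma multilinearCochain_contractNth_castSucc (g : Fin (n + 1) → L) (i : Fin n) :
    multilinearCochain f (Fin.contractNth i.castSucc (· * ·) g) =
      multilinearCochain f (g ∘ i.succ.succAbove) +
        multilinearCochain f (g ∘ i.castSucc.succAbove) := by
  have hself : g ∘ i.castSucc.succAbove =
      Function.update (g ∘ i.castSucc.succAbove) i (g i.succ) := by simp
  conv_rhs => rw [comp_succAbove_succ_eq_update, hself]
  simp only [contractNth_castSucc_eq_update, multilinearCochain, Function.comp_update,
    Function.update_idem, ofMul_mul, f.map_update_add]

lemma d_multilinearCochain :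
    inhomogeneousCochains.d (Rep.trivial k L V) n (multilinearCochain f) = 0 := by
  funext g
  refine (trivial_d_apply n (multilinearCochain f) g).trans (Eq.trans ?_
    (add_sum_alternating_add_last (k := k) fun m => multilinearCochain f (g ∘ m.succAbove)))
  simp only [Fin.sum_univ_castSucc, multilinearCochain_contractNth_castSucc, contractNth_last,
    Fin.succAbove_zero, Fin.succAbove_last, Fin.val_castSucc, Fin.val_last, add_assoc]

lemma alternatingEval_multilinearCochain (v : Fin n → L) :
    alternatingEval k v (multilinearCochain f) =
      MultilinearMap.alternatization f (Additive.ofMul ∘ v) := by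
  rw [alternatingEval_apply, MultilinearMap.alternatization_apply]
  rfl

variable (k) in
/-- The cohomology class of a multilinear map, viewed as an inhomogeneous cocycle. -/
noncomputable def multilinearClass : groupCohomology (Rep.trivial k L V) n :=
  π _ n (cocyclesMk (A := Rep.trivial k L V) (multilinearCochain f) (d_multilinearCochain f))

end MultilinearCochain

section Pairing

variable {k L V : Type u} [CommRing k] [CommGroup L] [AddCommGroup V] [Module k V] {j : ℕ}

lemma d_comp_alternatingEval (v : Fin j → L) (i : ℕ) :
    (inhomogeneousCochains (Rep.trivial k L V)).d i j ≫
      (ModuleCat.ofHom (alternatingEval k v) :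
        ModuleCat.of k ((Fin j → L) → V) ⟶ ModuleCat.of k V) = 0 := by
  by_cases h : i + 1 = j
  · subst h
    rw [inhomogeneousCochains.d_def]
    ext F
    exact alternatingEval_d v F
  · rw [HomologicalComplex.shape _ _ _ h, Limits.zero_comp]

variable (k V) in
/-- The pairing `H^j(L, V) → V` of cohomology classes with the homology class `v 0 ∧ v 1 ∧ …`,
induced by `alternatingEval`. -/
noncomputable def wedgePairing (v : Fin j → L) :
    groupCohomology (Rep.trivial k L V) j →ₗ[k] V :=
  ((inhomogeneousCochains (Rep.trivial k L V)).homologyι j ≫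
    (inhomogeneousCochains (Rep.trivial k L V)).descOpcycles
      (ModuleCat.ofHom (alternatingEval k v)) _ rfl (d_comp_alternatingEval v _)).hom

lemma wedgePairing_π (v : Fin j → L) (z : cocycles (Rep.trivial k L V) j) :
    wedgePairing k V v (π _ j z) =
      alternatingEval k v (iCocycles (Rep.trivial k L V) j z) := by
  have h : π (Rep.trivial k L V) j ≫ ModuleCat.ofHom (wedgePairing k V v) =
      iCocycles (Rep.trivial k L V) j ≫ ModuleCat.ofHom (alternatingEval k v) :=
    (HomologicalComplex.homology_π_ι_assoc _ _).trans
      (congrArg _ (HomologicalComplex.p_descOpcycles _ _ _ _ _))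
  exact LinearMap.congr_fun (congrArg ModuleCat.Hom.hom h) z

lemma wedgePairing_multilinearClass (v : Fin j → L)
    (f : MultilinearMap ℤ (fun _ : Fin j => Additive L) V) :
    wedgePairing k V v (multilinearClass k f) =
      MultilinearMap.alternatization f (Additive.ofMul ∘ v) := by
  rw [multilinearClass, wedgePairing_π, iCocycles_mk, alternatingEval_multilinearCochain]

end Pairing

section PairingMap

variable {k L V : Type} [CommRing k] [CommGroup L] [AddCommGroup V] [Module k V] {j : ℕ}

lemma wedgePairing_homologyMap_cochainsMap (v : Fin j → L) (f : L →* L) (τ : V →ₗ[k] V)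
    (x : groupCohomology (Rep.trivial k L V) j) :
    wedgePairing k V v ((HomologicalComplex.homologyMap
      (Crystal.cochainsMap (Rep.trivial k L V) (Rep.trivial k L V) f τ fun _ _ => rfl) j).hom x) =
      τ (wedgePairing k V (f ∘ v) x) := by
  induction x using groupCohomology_induction_on with
  | h z =>
    let Φ := Crystal.cochainsMap (Rep.trivial k L V) (Rep.trivial k L V) f τ fun _ _ => rfl
    have hπ := ConcreteCategory.congr_hom (HomologicalComplex.homologyπ_naturality Φ j) z
    have hi := ConcreteCategory.congr_hom (HomologicalComplex.cyclesMap_i Φ j) z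
    calc wedgePairing k V v ((HomologicalComplex.homologyMap Φ j).hom (π _ j z))
        = wedgePairing k V v (π _ j (HomologicalComplex.cyclesMap Φ j z)) := congrArg _ hπ
      _ = alternatingEval k v (iCocycles _ j (HomologicalComplex.cyclesMap Φ j z)) :=
          wedgePairing_π v _
      _ = alternatingEval k v (fun w => τ (iCocycles (Rep.trivial k L V) j z (f ∘ w))) :=
          congrArg _ hi
      _ = τ (wedgePairing k V (f ∘ v) (π _ j z)) := by
          simp only [wedgePairing_π, alternatingEval_apply, map_sum, Units.smul_def, map_zsmul,
            Function.comp_assoc]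

end PairingMap

section Compound

variable {ι κ R : Type*} [CommRing R] {j : ℕ}

/-- The compound matrix of the minors of `A` whose rows and columns are selected by the family
`idx` of index tuples. For the increasing `j`-tuples it is the matrix of `Λ^j A`. -/
def compoundMatrix (idx : ι → Fin j → κ) (A : Matrix κ κ R) : Matrix ι ι R :=
  Matrix.of fun a b => (A.submatrix (idx a) (idx b)).det

end Compound

section LatticeCohomology

lemma zmodHom_ofAdd_one {G : Type*} [Group G] (m : ℕ) [NeZero m] (α : G) (hα : α ^ m = 1) :
    Crystal.zmodHom m α hα (Multiplicative.ofAdd 1) = α := by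
  change α ^ (1 : ZMod m).val = α
  rw [ZMod.val_one_eq_one_mod, ← pow_eq_pow_mod _ hα, pow_one]

variable {n j : ℕ}

/-- The product `x_{I 0} ⊗ x_{I 1} ⊗ …` of coordinate functions on `ℤ^n`. -/
noncomputable def coordForm (I : Fin j → Fin n) :
    MultilinearMap ℤ (fun _ : Fin j => Additive (Crystal.Lat n)) ℤ :=
  (MultilinearMap.mkPiAlgebra ℤ (Fin j) ℤ).compLinearMap fun l =>
    LinearMap.proj (I l) ∘ₗ
      (AddEquiv.additiveMultiplicative (Fin n → ℤ)).toAddMonoidHom.toIntLinearMap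

lemma wedgePairing_coordForm (I J : Fin j → Fin n) (A : Matrix (Fin n) (Fin n) ℤ) :
    wedgePairing ℤ ℤ (fun l => Multiplicative.ofAdd (A.col (J l)))
      (multilinearClass ℤ (coordForm I)) = (A.submatrix I J).det := by
  rw [wedgePairing_multilinearClass, MultilinearMap.alternatization_apply, ← Matrix.det_transpose,
    Matrix.det_apply]
  rfl

variable {ι : Type} [DecidableEq ι] {idx : ι → Fin j → Fin n}

/-- The coordinates of a class in `H^j(ℤ^n, ℤ)`: its pairings with `e_{idx a 0} ∧ e_{idx a 1} ∧ …`,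
where `e_i` is written as a column of the identity matrix. -/
noncomputable def cohomologyCoords (idx : ι → Fin j → Fin n) :
    groupCohomology (Rep.trivial ℤ (Crystal.Lat n) ℤ) j →ₗ[ℤ] ι → ℤ :=
  LinearMap.pi fun a => wedgePairing ℤ ℤ fun l =>
    Multiplicative.ofAdd ((1 : Matrix (Fin n) (Fin n) ℤ).col (idx a l))

lemma cohomologyCoords_coordForm (hidx : compoundMatrix idx (1 : Matrix _ _ ℤ) = 1) (a : ι) :
    cohomologyCoords idx (multilinearClass ℤ (coordForm (idx a))) = Pi.single a 1 := by
  ext b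
  refine (wedgePairing_coordForm (idx a) (idx b) 1).trans ?_
  exact (congrFun₂ hidx a b).trans Matrix.one_eq_pi_single

variable [Fintype ι]

lemma cohomologyCoords_bijective (hidx : compoundMatrix idx (1 : Matrix _ _ ℤ) = 1)
    (hcard : Fintype.card ι = n.choose j) :
    Function.Bijective (cohomologyCoords idx) := by
  have hsurj : Function.Surjective (cohomologyCoords idx) := by
    rw [← LinearMap.range_eq_top, eq_top_iff, ← (Pi.basisFun ℤ ι).span_eq, Submodule.span_le]
    rintro _ ⟨a, rfl⟩
    exact ⟨_, (cohomologyCoords_coordForm hidx a).trans (Pi.basisFun_apply ℤ ι a).symm⟩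
  refine ⟨injective_of_surjective_of_spanRank_le _ hsurj ?_, hsurj⟩
  rw [Cardinal.mk_fintype, hcard]
  exact spanRank_groupCohomology_le_choose (MulEquiv.refl _) j

lemma sum_cohomologyCoords_smul (hidx : compoundMatrix idx (1 : Matrix _ _ ℤ) = 1)
    (hcard : Fintype.card ι = n.choose j)
    (x : groupCohomology (Rep.trivial ℤ (Crystal.Lat n) ℤ) j) :
    ∑ a, cohomologyCoords idx x a • multilinearClass ℤ (coordForm (idx a)) = x := by
  apply (cohomologyCoords_bijective hidx hcard).1
  simp only [map_sum, map_zsmul, cohomologyCoords_coordForm hidx]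
  exact (pi_eq_sum_univ' _).symm

lemma wedgePairing_col_eq_sum (hidx : compoundMatrix idx (1 : Matrix _ _ ℤ) = 1)
    (hcard : Fintype.card ι = n.choose j) (A : Matrix (Fin n) (Fin n) ℤ) (J : Fin j → Fin n)
    (x : groupCohomology (Rep.trivial ℤ (Crystal.Lat n) ℤ) j) :
    wedgePairing ℤ ℤ (fun l => Multiplicative.ofAdd (A.col (J l))) x =
      ∑ a, (A.submatrix (idx a) J).det * cohomologyCoords idx x a := by
  conv_lhs => rw [← sum_cohomologyCoords_smul hidx hcard x]
  simp only [map_sum, map_zsmul, wedgePairing_coordForm, smul_eq_mul, mul_comm]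

variable {q : ℕ} [NeZero q] {M : Matrix (Fin n) (Fin n) ℤ} (hq : M ^ q = 1)

lemma matAction_ofAdd_one_apply (v : Crystal.Lat n) :
    (Crystal.matAction q M hq (Multiplicative.ofAdd 1) v).toAdd = M *ᵥ v.toAdd := by
  rw [Crystal.matAction, zmodHom_ofAdd_one]
  rfl

lemma matAction_ofAdd_one_inv_apply (v : Fin n → ℤ) :
    Crystal.matAction q M hq (Multiplicative.ofAdd 1)⁻¹ (Multiplicative.ofAdd v) =
      Multiplicative.ofAdd (M ^ (q - 1) *ᵥ v) := by
  rw [map_inv, MulAut.inv_apply, MulEquiv.symm_apply_eq]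
  apply Multiplicative.toAdd.injective
  rw [matAction_ofAdd_one_apply, toAdd_ofAdd, toAdd_ofAdd, Matrix.mulVec_mulVec,
    mul_pow_sub_one (NeZero.ne q), hq, Matrix.one_mulVec]

/-- `H^j(ℤ^n, ℤ)` as a representation of `ℤ/q`, the generator acting on `ℤ^n` by `M`. -/
noncomputable abbrev latticeCohRep (j : ℕ) : Rep ℤ (Multiplicative (ZMod q)) :=
  Crystal.cohRep (Crystal.matAction q M hq) (1 : Representation ℤ (Multiplicative (ZMod q)) ℤ) j

lemma cohomologyCoords_latticeCohRep (hidx : compoundMatrix idx (1 : Matrix _ _ ℤ) = 1)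
    (hcard : Fintype.card ι = n.choose j) (x : latticeCohRep hq j) :
    cohomologyCoords idx ((latticeCohRep hq j).ρ (Multiplicative.ofAdd 1) x) =
      (compoundMatrix idx (M ^ (q - 1)))ᵀ *ᵥ cohomologyCoords idx x := by
  ext a
  have hcol : (Crystal.matAction q M hq (Multiplicative.ofAdd 1)⁻¹).toMonoidHom ∘
      (fun l => Multiplicative.ofAdd ((1 : Matrix (Fin n) (Fin n) ℤ).col (idx a l))) =
        fun l => Multiplicative.ofAdd ((M ^ (q - 1)).col (idx a l)) := by
    ext1 l
    refine (matAction_ofAdd_one_inv_apply hq _).trans ?_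
    rw [← Matrix.mulVec_single_one, Matrix.mulVec_mulVec, mul_one, Matrix.mulVec_single_one]
  refine (wedgePairing_homologyMap_cochainsMap _ _ _ _).trans ?_
  rw [hcol]
  exact wedgePairing_col_eq_sum hidx hcard (M ^ (q - 1)) (idx a) x

end LatticeCohomology

section CyclicSubquotient

variable {ι : Type*} [Fintype ι]

/-- `ker P / im Q` is cyclic of order `d` (infinite cyclic if `d = 0`): the reduction mod `d` of
some integral functional `ℓ` maps `ker P` onto `ℤ/d`, a preimage of `1` being `w`, with
kernel `im Q`. -/
def IsCyclicSubquotient (P Q : Matrix ι ι ℤ) (d : ℕ) : Prop :=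
  ∃ w ℓ : ι → ℤ, P *ᵥ w = 0 ∧ (d : ℤ) ∣ ℓ ⬝ᵥ w - 1 ∧
    ∀ x, P *ᵥ x = 0 → ((d : ℤ) ∣ ℓ ⬝ᵥ x ↔ ∃ y, Q *ᵥ y = x)

namespace IsCyclicSubquotient

variable {P Q : Matrix ι ι ℤ} {d : ℕ}

/-- On `ker P` the certificate gives the decomposition `x = (ℓ ⬝ᵥ x) • w + Q *ᵥ (K *ᵥ x)`. The
factor `e` clears the denominators of a rational matrix `C` with `1 - w ℓᵀ - Q K = C P`. -/
lemma of_certificate [DecidableEq ι] (w ℓ u : ι → ℤ) (K C : Matrix ι ι ℤ) (e : ℤ)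
    (hw : P *ᵥ w = 0 := by decide +kernel)
    (hℓw : (d : ℤ) ∣ ℓ ⬝ᵥ w - 1 := by decide +kernel)
    (hℓQ : ∀ i, (d : ℤ) ∣ (ℓ ᵥ* Q) i := by decide +kernel)
    (hu : Q *ᵥ u = (d : ℤ) • w := by decide +kernel)
    (he : e ≠ 0 := by decide +kernel)
    (hC : e • (1 - vecMulVec w ℓ - Q * K) = C * P := by decide +kernel) :
    IsCyclicSubquotient P Q d := by
  refine ⟨w, ℓ, hw, hℓw, fun x hx => ⟨?_, ?_⟩⟩
  · rintro ⟨b, hb⟩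
    have hzero : e • (x - (ℓ ⬝ᵥ x) • w - Q *ᵥ K *ᵥ x) = 0 := by
      simpa only [smul_mulVec, sub_mulVec, one_mulVec, vecMulVec_mulVec, ← mulVec_mulVec, hx,
        mulVec_zero, op_smul_eq_smul] using congrArg (· *ᵥ x) hC
    have hx' : x = (ℓ ⬝ᵥ x) • w + Q *ᵥ K *ᵥ x := by
      rw [← sub_eq_zero, ← sub_sub]
      exact (smul_eq_zero.1 hzero).resolve_left he
    refine ⟨b • u + K *ᵥ x, ?_⟩
    rw [mulVec_add, mulVec_smul, hu, smul_smul, mul_comm, ← hb, ← hx']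
  · rintro ⟨y, rfl⟩
    rw [dotProduct_mulVec]
    exact Finset.dvd_sum fun i _ => (hℓQ i).mul_right _

lemma nonempty_addEquiv {R V X : Type*} [Ring R] [AddCommGroup V] [Module R V] [AddCommGroup X]
    [Module R X] (h : IsCyclicSubquotient P Q d) (c : V ≃+ (ι → ℤ)) {p r : V →ₗ[R] V}
    (hp : ∀ x, c (p x) = P *ᵥ c x) (hr : ∀ x, c (r x) = Q *ᵥ c x)
    (π : LinearMap.ker p →ₗ[R] X) (hπ : Function.Surjective π)
    (hπ₀ : ∀ x, π x = 0 ↔ x.1 ∈ LinearMap.range r) : Nonempty (X ≃+ ZMod d) := by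
  obtain ⟨w, ℓ, hw, hℓw, hℓ⟩ := h
  have mem_ker (x : V) : x ∈ LinearMap.ker p ↔ P *ᵥ c x = 0 := by
    rw [LinearMap.mem_ker, ← hp, map_eq_zero_iff c c.injective]
  have mem_range (x : V) : x ∈ LinearMap.range r ↔ ∃ y, Q *ᵥ y = c x := by
    simp only [LinearMap.mem_range, ← c.injective.eq_iff, hr, c.surjective.exists]
  let θ : LinearMap.ker p →+ ZMod d := AddMonoidHom.mk' (fun x => ((ℓ ⬝ᵥ c x.1 : ℤ) : ZMod d))
    fun x y => by simp only [Submodule.coe_add, map_add, dotProduct_add, Int.cast_add]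
  have θ_surjective : Function.Surjective θ := by
    intro z
    obtain ⟨a, rfl⟩ := ZMod.intCast_surjective z
    have hone : ((ℓ ⬝ᵥ w : ℤ) : ZMod d) = 1 := by
      rwa [← sub_eq_zero, ← Int.cast_one, ← Int.cast_sub, ZMod.intCast_zmod_eq_zero_iff_dvd]
    refine ⟨⟨c.symm (a • w), ?_⟩, ?_⟩
    · rw [mem_ker, c.apply_symm_apply, mulVec_smul, hw, smul_zero]
    · change ((ℓ ⬝ᵥ c (c.symm (a • w)) : ℤ) : ZMod d) = a
      rw [c.apply_symm_apply, dotProduct_smul, smul_eq_mul, Int.cast_mul, hone, mul_one]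
  have ker_eq : π.toAddMonoidHom.ker = θ.ker := by
    ext x
    rw [AddMonoidHom.mem_ker, AddMonoidHom.mem_ker]
    refine (hπ₀ x).trans ((mem_range x).trans ?_)
    exact (hℓ _ ((mem_ker x).1 x.2)).symm.trans (ZMod.intCast_zmod_eq_zero_iff_dvd _ _).symm
  exact ⟨(QuotientAddGroup.quotientKerEquivOfSurjective π.toAddMonoidHom hπ).symm.trans
    ((QuotientAddGroup.quotientAddEquivOfEq ker_eq).trans
      (QuotientAddGroup.quotientKerEquivOfSurjective θ θ_surjective))⟩

end IsCyclicSubquotient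

end CyclicSubquotient

section CyclicGroup

open Rep.FiniteCyclicGroup

variable {k G : Type u} [CommRing k] [CommGroup G] [Fintype G] (A : Rep k G) (g : G)
  (hg : ∀ x, x ∈ Subgroup.zpowers g)

lemma groupCohomologyπEven_surjective (i : ℕ) [NeZero i] (hi : Even i) :
    Function.Surjective (groupCohomologyπEven A g hg i hi) := by
  rw [← ModuleCat.epi_iff_surjective]
  have : Epi (ShortComplex.homologyπ (normHomCompSub A g) ≫
    (groupCohomologyIsoEven A g hg i hi).inv) := epi_comp _ _
  exact epi_comp (ShortComplex.moduleCatCyclesIso (normHomCompSub A g)).inv _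

lemma groupCohomologyπOdd_surjective (i : ℕ) (hi : Odd i) :
    Function.Surjective (groupCohomologyπOdd A g hg i hi) := by
  rw [← ModuleCat.epi_iff_surjective]
  have : Epi (ShortComplex.homologyπ (subCompNormHom A g) ≫
    (groupCohomologyIsoOdd A g hg i hi).inv) := epi_comp _ _
  exact epi_comp (ShortComplex.moduleCatCyclesIso (subCompNormHom A g)).inv _

lemma norm_eq_sum_range_pow {k G V : Type*} [CommSemiring k] [Group G] [Fintype G]
    [AddCommMonoid V] [Module k V] (ρ : Representation k G V) {g : G}
    (hg : ∀ x, x ∈ Subgroup.zpowers g) :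
    ρ.norm = ∑ i ∈ Finset.range (Fintype.card G), ρ g ^ i := by
  classical
  have hinj : Set.InjOn (g ^ ·) (Finset.range (Nat.card G) : Set ℕ) := by
    rw [← orderOf_eq_card_of_forall_mem_zpowers hg, Finset.coe_range]
    exact pow_injOn_Iio_orderOf
  rw [Representation.norm, ← IsCyclic.image_range_card hg, Finset.sum_image hinj,
    Nat.card_eq_fintype_card]
  simp only [map_pow]

end CyclicGroup

section CoordinateAction

open Rep.FiniteCyclicGroup

/-- For all `i`, the group `H^i(G, A)` is cyclic, of order `d₀` if `i = 0`, `dOdd` if `i` is odd and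
`dEven` if `i` is even and positive. Order `0` means infinite cyclic, as `ZMod 0 = ℤ`. -/
structure HasCyclicCohomology {k G : Type u} [CommRing k] [Group G] (A : Rep k G)
    (d₀ dOdd dEven : ℕ) : Prop where
  zero : Nonempty (groupCohomology A 0 ≃+ ZMod d₀)
  odd : ∀ i, Odd i → Nonempty (groupCohomology A i ≃+ ZMod dOdd)
  even : ∀ i, i ≠ 0 → Even i → Nonempty (groupCohomology A i ≃+ ZMod dEven)

namespace HasCyclicCohomology

variable {k G : Type u} [CommRing k] [Group G] {A : Rep k G} {d₀ d i : ℕ}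

lemma nonempty_addEquiv_of_ne_zero (h : HasCyclicCohomology A d₀ d d) (hi : i ≠ 0) :
    Nonempty (groupCohomology A i ≃+ ZMod d) :=
  i.even_or_odd.elim (h.even i hi) (h.odd i)

lemma subsingleton_of_odd (h : HasCyclicCohomology A d₀ 1 d) (hi : Odd i) :
    Subsingleton (groupCohomology A i) :=
  (h.odd i hi).some.toEquiv.subsingleton

lemma subsingleton_of_even (h : HasCyclicCohomology A 1 d 1) (hi : Even i) :
    Subsingleton (groupCohomology A i) := by
  rcases eq_or_ne i 0 with rfl | hi₀
  · exact h.zero.some.toEquiv.subsingleton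
  · exact (h.even i hi₀ hi).some.toEquiv.subsingleton

end HasCyclicCohomology

variable {ι : Type*} [Fintype ι] [DecidableEq ι] {k G : Type u} [CommRing k] [CommGroup G]
  {A : Rep k G} {g : G} {B : Matrix ι ι ℤ} {c : A ≃+ (ι → ℤ)}

lemma coords_sub_id (hc : ∀ x, c (A.ρ g x) = B *ᵥ c x) (x : A) :
    c ((Rep.applyAsHom A g - 𝟙 A).hom.toLinearMap x) = (B - 1) *ᵥ c x := by
  rw [sub_mulVec, one_mulVec, ← hc, ← map_sub]
  rfl

lemma coords_pow (hc : ∀ x, c (A.ρ g x) = B *ᵥ c x) (i : ℕ) (x : A) :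
    c ((A.ρ g ^ i) x) = B ^ i *ᵥ c x := by
  induction i generalizing x with
  | zero => rw [pow_zero, pow_zero, one_mulVec]; rfl
  | succ i ih => rw [pow_succ, pow_succ, ← mulVec_mulVec, ← hc, ← ih]; rfl

variable [Fintype G]

lemma coords_norm (hg : ∀ x, x ∈ Subgroup.zpowers g) (hc : ∀ x, c (A.ρ g x) = B *ᵥ c x) (x : A) :
    c (A.norm.hom.toLinearMap x) = (∑ i ∈ Finset.range (Fintype.card G), B ^ i) *ᵥ c x := by
  change c (A.ρ.norm x) = _
  rw [norm_eq_sum_range_pow A.ρ hg, LinearMap.sum_apply, map_sum, sum_mulVec]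
  simp only [coords_pow hc]

lemma hasCyclicCohomology_of_coords (hg : ∀ x, x ∈ Subgroup.zpowers g)
    (hc : ∀ x, c (A.ρ g x) = B *ᵥ c x) {d₀ dOdd dEven : ℕ}
    (h₀ : IsCyclicSubquotient (B - 1) 0 d₀)
    (hOdd : IsCyclicSubquotient (∑ i ∈ Finset.range (Fintype.card G), B ^ i) (B - 1) dOdd)
    (hEven : IsCyclicSubquotient (B - 1) (∑ i ∈ Finset.range (Fintype.card G), B ^ i) dEven) :
    HasCyclicCohomology A d₀ dOdd dEven where
  zero := by
    let E := (groupCohomologyIso₀ A g hg).toLinearEquiv.symm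
    refine h₀.nonempty_addEquiv c (coords_sub_id hc) (r := 0) ?_ E.toLinearMap E.surjective ?_
    · intro x
      rw [zero_mulVec, LinearMap.zero_apply, map_zero]
    · intro x
      rw [LinearMap.range_zero, Submodule.mem_bot, ZeroMemClass.coe_eq_zero]
      exact map_eq_zero_iff E E.injective
  odd i hi := hOdd.nonempty_addEquiv c (coords_norm hg hc) (coords_sub_id hc)
    (groupCohomologyπOdd A g hg i hi).hom (groupCohomologyπOdd_surjective A g hg i hi)
    (groupCohomologyπOdd_eq_zero_iff A g hg i hi)
  even i hi₀ hi :=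
    have : NeZero i := ⟨hi₀⟩
    hEven.nonempty_addEquiv c (coords_sub_id hc) (coords_norm hg hc)
      (groupCohomologyπEven A g hg i hi).hom (groupCohomologyπEven_surjective A g hg i hi)
      (groupCohomologyπEven_eq_zero_iff A g hg i hi)

end CoordinateAction

section Holonomy

lemma mem_zpowers_ofAdd_one {q : ℕ} (x : Multiplicative (ZMod q)) :
    x ∈ Subgroup.zpowers (Multiplicative.ofAdd (1 : ZMod q)) := by
  obtain ⟨a, ha⟩ := ZMod.intCast_surjective x.toAdd
  refine ⟨a, ?_⟩
  change Multiplicative.ofAdd (1 : ZMod q) ^ a = x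
  rw [← ofAdd_zsmul, zsmul_one, ha, ofAdd_toAdd]

lemma hasCyclicCohomology_latticeCohRep {n q j : ℕ} [NeZero q] {M : Matrix (Fin n) (Fin n) ℤ}
    (hq : M ^ q = 1) {ι : Type} [Fintype ι] [DecidableEq ι] {idx : ι → Fin j → Fin n}
    {B N : Matrix ι ι ℤ} (hcard : Fintype.card ι = n.choose j)
    (hidx : compoundMatrix idx (1 : Matrix _ _ ℤ) = 1)
    (hB : (compoundMatrix idx (M ^ (q - 1)))ᵀ = B)
    (hN : ∑ i ∈ Finset.range q, B ^ i = N) {d₀ dOdd dEven : ℕ}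
    (h₀ : IsCyclicSubquotient (B - 1) 0 d₀)
    (hOdd : IsCyclicSubquotient N (B - 1) dOdd)
    (hEven : IsCyclicSubquotient (B - 1) N dEven) :
    HasCyclicCohomology (latticeCohRep hq j) d₀ dOdd dEven := by
  subst hB hN
  let c : latticeCohRep hq j ≃+ (ι → ℤ) :=
    AddEquiv.ofBijective (cohomologyCoords idx) (cohomologyCoords_bijective hidx hcard)
  refine hasCyclicCohomology_of_coords (c := c) mem_zpowers_ofAdd_one
    (cohomologyCoords_latticeCohRep hq hidx hcard) h₀ ?_ ?_ <;>
  rwa [Fintype.card_multiplicative, ZMod.card]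

lemma hasCyclicCohomology_latticeCohRep_of_lt {n q j : ℕ} [NeZero q]
    {M : Matrix (Fin n) (Fin n) ℤ} (hq : M ^ q = 1) (hj : n < j) :
    HasCyclicCohomology (latticeCohRep hq j) 1 1 1 := by
  have hzero : IsCyclicSubquotient (0 : Matrix (Fin 0) (Fin 0) ℤ) 0 1 :=
    .of_certificate 0 0 0 0 0 1
  exact hasCyclicCohomology_latticeCohRep hq (idx := ![]) (Nat.choose_eq_zero_of_lt hj).symm
    (Subsingleton.elim _ _) (Subsingleton.elim _ 0) (Subsingleton.elim _ 0) hzero hzero hzero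

/-- `H^j(ℤ^4, ℤ)` as a representation of `ℤ/4` acting through `holM`. -/
noncomputable abbrev holRep (j : ℕ) : Rep ℤ (Multiplicative (ZMod 4)) := latticeCohRep holM_pow j

lemma hasCyclicCohomology_holRep_zero : HasCyclicCohomology (holRep 0) 0 1 4 := by
  refine hasCyclicCohomology_latticeCohRep holM_pow
    (idx := ![![]])
    (B := !![1])
    (N := !![4])
    rfl (by decide) (by decide) (by decide) ?_ ?_ ?_
  · exact .of_certificate ![1] ![1] 0 0 0 1
  · exact .of_certificate 0 0 0 0 !![1] 4
  · exact .of_certificate ![1] ![1] ![1] 0 0 1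

lemma hasCyclicCohomology_holRep_one : HasCyclicCohomology (holRep 1) 0 2 2 := by
  refine hasCyclicCohomology_latticeCohRep holM_pow
    (idx := ![![0], ![1], ![2], ![3]])
    (B := !![0, 1, 0, 0; -1, 0, 0, 0; 0, 0, -1, 0; 1, 0, 1, 1])
    (N := !![0, 0, 0, 0; 0, 0, 0, 0; 0, 0, 0, 0; 2, 2, 2, 4])
    rfl (by decide) (by decide) (by decide) ?_ ?_ ?_
  · exact .of_certificate ![0, 0, 0, 1] ![0, 0, 0, 1] 0 0
      !![0, 0, 1, 2; 2, 0, 1, 2; 0, 0, -1, 0; 0, 0, 0, 0] 2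
  · exact .of_certificate ![1, 0, -1, 0] ![0, 0, -1, 0] ![-1, 1, 1, 0]
      !![0, 0, 0, 1; 0, -1, 0, -1; 0, 0, 0, 0; 0, 0, 0, 0]
      !![0, 0, 0, 1; 0, 0, 0, 0; 0, 0, 0, 0; 0, 0, 0, 0] 2
  · exact .of_certificate ![0, 0, 0, 1] ![0, 0, 0, 1] ![1, 0, 0, 0] 0
      !![0, 0, 1, 2; 2, 0, 1, 2; 0, 0, -1, 0; 0, 0, 0, 0] 2

lemma hasCyclicCohomology_holRep_two : HasCyclicCohomology (holRep 2) 0 4 2 := by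
  refine hasCyclicCohomology_latticeCohRep holM_pow
    (idx := ![![0, 1], ![0, 2], ![0, 3], ![1, 2], ![1, 3], ![2, 3]])
    (B := !![1, 0, 0, 0, 0, 0; 0, 0, 0, -1, 0, 0; -1, 0, 0, 1, 1, 0; 0, 1, 0, 0, 0, 0;
      0, -1, -1, 0, 0, 0; 0, 1, 0, 0, 0, -1])
    (N := !![4, 0, 0, 0, 0, 0; 0, 0, 0, 0, 0, 0; -2, 0, 0, 0, 0, 0; 0, 0, 0, 0, 0, 0;
      2, 0, 0, 0, 0, 0; 0, 0, 0, 0, 0, 0])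
    rfl (by decide +kernel) (by decide +kernel) (by decide +kernel) ?_ ?_ ?_
  · exact .of_certificate ![2, 0, -1, 0, 1, 0] ![0, 0, 0, 0, 1, 0] 0 0
      !![0, -4, -4, 0, 4, 0; 0, -2, 0, 2, 0, 0; 0, 2, 0, -2, -4, 0; 0, -2, 0, -2, 0, 0;
        0, 0, 0, 0, 0, 0; 0, -1, 0, 1, 0, -2] 4
  · exact .of_certificate ![0, 0, 0, 1, 0, 0] ![0, -1, 0, 1, 0, -2] ![0, 2, -2, -2, 0, 1]
      !![0, -1, -1, 0, 1, 0; 0, 0, 0, 0, 0, 1; 0, 0, 0, 0, -1, -1; 0, -1, 0, 0, 0, -1;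
        0, 0, 0, 0, 0, 0; 0, 0, 0, 0, 0, 0]
      !![0, 0, -1, 0, 0, 0; 0, 0, 0, 0, 0, 0; 0, 0, 0, 0, 0, 0; 0, 0, 0, 0, 0, 0;
        0, 0, 0, 0, 0, 0; 0, 0, 0, 0, 0, 0] 2
  · exact .of_certificate ![2, 0, -1, 0, 1, 0] ![0, 0, 0, 0, 1, 0] ![1, 0, 0, 0, 0, 0] 0
      !![0, -4, -4, 0, 4, 0; 0, -2, 0, 2, 0, 0; 0, 2, 0, -2, -4, 0; 0, -2, 0, -2, 0, 0;
        0, 0, 0, 0, 0, 0; 0, -1, 0, 1, 0, -2] 4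

lemma hasCyclicCohomology_holRep_three : HasCyclicCohomology (holRep 3) 0 2 2 := by
  refine hasCyclicCohomology_latticeCohRep holM_pow
    (idx := ![![0, 1, 2], ![0, 1, 3], ![0, 2, 3], ![1, 2, 3]])
    (B := !![-1, 0, 0, 0; 1, 1, 0, 0; -1, 0, 0, -1; 0, 0, 1, 0])
    (N := !![0, 0, 0, 0; 2, 4, 0, 0; 0, 0, 0, 0; 0, 0, 0, 0])
    rfl (by decide +kernel) (by decide +kernel) (by decide +kernel) ?_ ?_ ?_
  · exact .of_certificate ![0, 1, 0, 0] ![0, 1, 0, 0] 0 0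
      !![0, 2, 0, 0; 0, 0, 0, 0; 0, -1, -1, 1; 0, -1, -1, -1] 2
  · exact .of_certificate ![0, 0, 0, -1] ![0, -1, -1, -1] ![0, 0, -1, 1]
      !![0, 1, 0, 0; 0, 0, 0, 0; 0, -1, -1, 0; 0, 0, 0, 0]
      !![0, 1, 0, 0; 0, 0, 0, 0; 0, 0, 0, 0; 0, 0, 0, 0] 2
  · exact .of_certificate ![0, 1, 0, 0] ![0, 1, 0, 0] ![1, 0, 0, 0] 0
      !![0, 2, 0, 0; 0, 0, 0, 0; 0, -1, -1, 1; 0, -1, -1, -1] 2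

lemma hasCyclicCohomology_holRep_four : HasCyclicCohomology (holRep 4) 1 2 1 := by
  refine hasCyclicCohomology_latticeCohRep holM_pow
    (idx := ![![0, 1, 2, 3]])
    (B := !![-1])
    (N := !![0])
    rfl (by decide +kernel) (by decide +kernel) (by decide +kernel) ?_ ?_ ?_
  · exact .of_certificate 0 0 0 0 !![-1] 2
  · exact .of_certificate ![-1] ![-1] ![1] 0 0 1
  · exact .of_certificate 0 0 0 0 !![-1] 2

end Holonomy

end LatticeCoefficients

theorem cohomology_of_cyclic_with_induced_coefficients :
    (∀ j, j ≤ 3 → Nonempty (Hc 0 j ≃+ ℤ)) ∧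
    (∀ i, 1 ≤ i → Nonempty (Hc i 1 ≃+ ZMod 2) ∧ Nonempty (Hc i 3 ≃+ ZMod 2)) ∧
    (∀ i, 2 ≤ i → Even i → Nonempty (Hc i 2 ≃+ ZMod 2)) ∧
    (∀ i, Odd i → Nonempty (Hc i 4 ≃+ ZMod 2)) ∧
    (∀ i, 2 ≤ i → Even i → Nonempty (Hc i 0 ≃+ ZMod 4)) ∧
    (∀ i, Odd i → Nonempty (Hc i 2 ≃+ ZMod 4)) ∧
    (∀ i j, ¬ (i = 0 ∧ j ≤ 3) → ¬ (1 ≤ i ∧ (j = 1 ∨ j = 2 ∨ j = 3)) →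
      ¬ (Odd i ∧ j = 4) → ¬ (2 ≤ i ∧ Even i ∧ j = 0) →
      Subsingleton (Hc i j)) := by
  refine ⟨fun j hj => ?_, fun i hi => ?_,
    fun i hi => hasCyclicCohomology_holRep_two.even i (by omega),
    hasCyclicCohomology_holRep_four.odd,
    fun i hi => hasCyclicCohomology_holRep_zero.even i (by omega),
    hasCyclicCohomology_holRep_two.odd, fun i j h₀ h₁₂₃ h₄ h₀' => ?_⟩
  · interval_cases j
    exacts [hasCyclicCohomology_holRep_zero.zero, hasCyclicCohomology_holRep_one.zero,
      hasCyclicCohomology_holRep_two.zero, hasCyclicCohomology_holRep_three.zero]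
  · have hi₀ : i ≠ 0 := by omega
    exact ⟨hasCyclicCohomology_holRep_one.nonempty_addEquiv_of_ne_zero hi₀,
      hasCyclicCohomology_holRep_three.nonempty_addEquiv_of_ne_zero hi₀⟩
  · obtain rfl | rfl | hj : j = 0 ∨ j = 4 ∨ 4 < j := by omega
    · refine hasCyclicCohomology_holRep_zero.subsingleton_of_odd
        (Nat.not_even_iff_odd.1 fun hi => ?_)
      have hi₂ := hi.two_dvd
      exact h₀' ⟨by omega, hi, rfl⟩
    · exact hasCyclicCohomology_holRep_four.subsingleton_of_even
        (Nat.not_odd_iff_even.1 fun hi => h₄ ⟨hi, rfl⟩)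
    · have hj := hasCyclicCohomology_latticeCohRep_of_lt holM_pow hj
      exact i.even_or_odd.elim hj.subsingleton_of_even hj.subsingleton_of_odd
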